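/- arXiv:2001.04555 — 4 statements merged into one kernel-verified Lean document; each statement's English description precedes it below -/
import Mathlib

section
/- Let k and l be natural numbers with 0 ≤ l < k. Then the set of rational numbers { a/2^l + b/(2^l·(2^{k−l}−1)) : a, b ∈ ℕ, a ≤ 2^l − 1, b ≤ 2^{k−l} − 1 } is equal to the set { c/(2^k − 2^l) : c ∈ ℕ, c ≤ 2^k − 2^l }. (Equivalently, the rationals in [0,1] expressible by a binary expansion with an l-digit prefix followed by an infinitely repeating (k−l)-digit suffix are exactly the integer multiples of 1/(2^k − 2^l) lying in [0,1].) -/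
/-!
Over the common denominator `A * M`, with `A = β ^ l` and `M = β ^ (k - l) - 1`, a prefix `a` and a
suffix `b` have the value `(a * M + b) / (A * M)`. For `b < M` the numerators `a * M + b` are the
divisions with remainder by `M`, so they run through all `c < A * M`; the suffix `b = M`, all of
whose digits are `β - 1`, contributes only the further numerator `A * M`, that is, the value `1`.
-/

theorem exists_lt_exists_le_mul_add_eq_iff {A : ℕ} (hA : 0 < A) (M c : ℕ) :
    (∃ a < A, ∃ b ≤ M, a * M + b = c) ↔ c ≤ A * M := by
  constructor
  · rintro ⟨a, ha, b, hb, rfl⟩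
    calc a * M + b ≤ a * M + M := by gcongr
      _ = (a + 1) * M := (Nat.succ_mul a M).symm
      _ ≤ A * M := Nat.mul_le_mul_right M ha
  · intro hc
    rcases hc.lt_or_eq with hlt | rfl
    · have hM : 0 < M := Nat.pos_of_lt_mul_left hlt
      exact ⟨c / M, (Nat.div_lt_iff_lt_mul hM).mpr hlt, c % M, (Nat.mod_lt c hM).le,
        Nat.div_add_mod' c M⟩
    · refine ⟨A - 1, Nat.sub_one_lt_of_lt hA, M, le_rfl, ?_⟩
      rw [← Nat.succ_mul, Nat.succ_eq_add_one, Nat.sub_add_cancel hA]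

theorem setOf_div_add_div_mul_eq_setOf_div_mul {K : Type*} [DivisionSemiring K] {A M : ℕ}
    (hA : 0 < A) (hM : (M : K) ≠ 0) :
    {q : K | ∃ a b : ℕ, a ≤ A - 1 ∧ b ≤ M ∧ q = a / A + b / (A * M)} =
      {q : K | ∃ c : ℕ, c ≤ A * M ∧ q = c / (A * M)} := by
  have common_denominator (a b : ℕ) :
      (a / A + b / (A * M) : K) = ((a * M + b : ℕ) : K) / (A * M) := by
    rw [← mul_div_mul_right (a : K) A hM, ← add_div, Nat.cast_add, Nat.cast_mul]
  ext q
  simp only [Set.mem_ofPred_eq, common_denominator, Nat.le_sub_one_iff_lt hA,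
    ← exists_lt_exists_le_mul_add_eq_iff hA]
  constructor
  · rintro ⟨a, b, ha, hb, hq⟩
    exact ⟨a * M + b, ⟨a, ha, b, hb, rfl⟩, hq⟩
  · rintro ⟨_, ⟨a, ha, b, hb, rfl⟩, hq⟩
    exact ⟨a, b, ha, hb, hq⟩

theorem prefix_suffix_expansions_eq_multiples_general {K : Type*} [DivisionRing K] [CharZero K]
    {β k l : ℕ} (hβ : 1 < β) (hlk : l < k) :
    {q : K | ∃ a b : ℕ, a ≤ β ^ l - 1 ∧ b ≤ β ^ (k - l) - 1 ∧
      q = (a : K) / β ^ l + (b : K) / (β ^ l * (β ^ (k - l) - 1))} =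
    {q : K | ∃ c : ℕ, c ≤ β ^ k - β ^ l ∧ q = (c : K) / (β ^ k - β ^ l)} := by
  have one_lt_pow : 1 < β ^ (k - l) := Nat.one_lt_pow (Nat.sub_ne_zero_of_lt hlk) hβ
  have cast_suffix : ((β ^ (k - l) - 1 : ℕ) : K) = (β : K) ^ (k - l) - 1 := by
    rw [Nat.cast_pred (Nat.zero_lt_of_lt one_lt_pow), Nat.cast_pow]
  have denominator : β ^ l * (β ^ (k - l) - 1) = β ^ k - β ^ l := by
    rw [Nat.mul_sub_one, pow_mul_pow_sub β hlk.le]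
  have cast_denominator : (β : K) ^ l * ((β : K) ^ (k - l) - 1) = (β : K) ^ k - (β : K) ^ l := by
    rw [mul_sub_one, pow_mul_pow_sub (β : K) hlk.le]
  have h := setOf_div_add_div_mul_eq_setOf_div_mul (K := K) (pow_pos (Nat.zero_lt_of_lt hβ) l)
    (Nat.cast_ne_zero.mpr (Nat.sub_ne_zero_of_lt one_lt_pow))
  simpa only [Nat.cast_pow, cast_suffix, denominator, cast_denominator] using h

/-- The rationals in [0,1] expressible by a binary expansion with an `l`-digit prefix
(value `a/2^l`) followed by an infinitely repeating `(k-l)`-digit suffix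
(value `b/(2^l * (2^(k-l) - 1))`) are exactly the integer multiples of
`1/(2^k - 2^l)` lying in `[0,1]`. -/
theorem prefix_suffix_expansions_eq_multiples (k l : ℕ) (hlk : l < k) :
    {q : ℚ | ∃ a b : ℕ, a ≤ 2 ^ l - 1 ∧ b ≤ 2 ^ (k - l) - 1 ∧
      q = (a : ℚ) / 2 ^ l + (b : ℚ) / (2 ^ l * (2 ^ (k - l) - 1))} =
    {q : ℚ | ∃ c : ℕ, c ≤ 2 ^ k - 2 ^ l ∧ q = (c : ℚ) / (2 ^ k - 2 ^ l)} := by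
  simpa only [Nat.cast_ofNat] using
    prefix_suffix_expansions_eq_multiples_general (K := ℚ) one_lt_two hlk
end

section
/- Let t ≥ 1 be an integer and let M ∈ M[n,t]. Suppose that no single-unit transfer improves the objective: for all indices i ≠ j with M_j ≥ 1, F(M + e_i − e_j) ≥ F(M), where e_i denotes the i-th standard unit tuple. Then M minimizes F over M[n,t]: for every W ∈ M[n,t], F(M) ≤ F(W). -/
/-!
The objective is a separable sum `∑ i, f i (M i)` in which convexity makes the increments of each
`f i : ℕ → G` nondecreasing. Local optimality then forces every increment already taken by `M`
(those of `f j` below `M j`) to be at most every increment still available (those of `f i` from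
`M i` on). A Lagrange multiplier `l`, the least available increment, therefore
separates the two families and supports every `f i` at `M i` by a line of the common slope `l`.
Summing the supporting inequalities at a competitor `W`, the linear terms cancel because
`∑ i, W i = ∑ i, M i`.
-/

open Finset fwdDiff

section OrderedGroup

variable {G : Type*} [AddCommGroup G] [PartialOrder G] [IsOrderedAddMonoid G]

theorem nsmul_le_sub_of_le_fwdDiff {f : ℕ → G} {a b : ℕ} {l : G} (hab : a ≤ b)
    (hl : ∀ k, a ≤ k → k < b → l ≤ Δ_[1] f k) : (b - a) • l ≤ f b - f a := by
  calc (b - a) • l = #(Ico a b) • l := by rw [Nat.card_Ico]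
    _ ≤ ∑ k ∈ Ico a b, Δ_[1] f k :=
      card_nsmul_le_sum _ _ _ fun k hk ↦ hl k (mem_Ico.1 hk).1 (mem_Ico.1 hk).2
    _ = f b - f a := sum_Ico_sub f hab

theorem sub_le_nsmul_of_fwdDiff_le {f : ℕ → G} {a b : ℕ} {l : G} (hab : a ≤ b)
    (hl : ∀ k, a ≤ k → k < b → Δ_[1] f k ≤ l) : f b - f a ≤ (b - a) • l :=
  nsmul_le_sub_of_le_fwdDiff (G := Gᵒᵈ) hab hl

theorem add_zsmul_le_of_fwdDiff_le_of_le_fwdDiff {f : ℕ → G} {m : ℕ} {l : G}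
    (hbelow : ∀ k < m, Δ_[1] f k ≤ l) (habove : ∀ k, m ≤ k → l ≤ Δ_[1] f k) (w : ℕ) :
    f m + ((w : ℤ) - m) • l ≤ f w := by
  rcases le_total m w with hmw | hwm
  · have h := nsmul_le_sub_of_le_fwdDiff hmw fun k hk _ ↦ habove k hk
    rwa [← natCast_zsmul, Nat.cast_sub hmw, le_sub_iff_add_le'] at h
  · have h := sub_le_nsmul_of_fwdDiff_le hwm fun k _ hk ↦ hbelow k hk
    rw [← natCast_zsmul, Nat.cast_sub hwm, sub_le_iff_le_add] at h
    rwa [← neg_sub (m : ℤ), neg_zsmul, ← sub_eq_add_neg, sub_le_iff_le_add']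

end OrderedGroup

section SeparableSum

/-- The tuple `M + e_i - e_j` of a single-unit transfer from `j` to `i`. The subtraction is
truncated, so this has the intended value when `i = j` or `1 ≤ M j`. -/
def unitTransfer {ι : Type*} [DecidableEq ι] (M : ι → ℕ) (i j : ι) : ι → ℕ :=
  fun r ↦ M r + (if r = i then 1 else 0) - (if r = j then 1 else 0)

variable {ι G : Type*} [Fintype ι] [AddCommGroup G]

theorem sum_unitTransfer_sub_sum [DecidableEq ι] (f : ι → ℕ → G) {M : ι → ℕ} {i j : ι}
    (hij : i ≠ j) (hj : 1 ≤ M j) :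
    ∑ r, f r (unitTransfer M i j r) - ∑ r, f r (M r) =
      Δ_[1] (f i) (M i) - Δ_[1] (f j) (M j - 1) := by
  have hunchanged : ∀ r, r ≠ i ∧ r ≠ j → f r (unitTransfer M i j r) - f r (M r) = 0 := by
    rintro r ⟨hri, hrj⟩
    simp [unitTransfer, hri, hrj]
  rw [← sum_sub_distrib, Fintype.sum_eq_add i j hij hunchanged]
  simp [unitTransfer, hij, hij.symm, fwdDiff, Nat.sub_add_cancel hj, sub_eq_add_neg]

variable [LinearOrder G] [IsOrderedAddMonoid G] {f : ι → ℕ → G} {M W : ι → ℕ}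

theorem sum_le_sum_of_fwdDiff_le_fwdDiff (hf : ∀ i, Monotone (Δ_[1] (f i)))
    (hincr : ∀ i j, ∀ k < M j, Δ_[1] (f j) k ≤ Δ_[1] (f i) (M i)) (hMW : ∑ i, W i = ∑ i, M i) :
    ∑ i, f i (M i) ≤ ∑ i, f i (W i) := by
  cases isEmpty_or_nonempty ι
  · simp
  obtain ⟨a, ha⟩ := Finite.exists_min fun i ↦ Δ_[1] (f i) (M i)
  set l := Δ_[1] (f a) (M a)
  have hsupport (i : ι) : f i (M i) + ((W i : ℤ) - M i) • l ≤ f i (W i) :=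
    add_zsmul_le_of_fwdDiff_le_of_le_fwdDiff (hincr a i)
      (fun _ hk ↦ (ha i).trans (hf i hk)) (W i)
  have hcancel : ∑ i, ((W i : ℤ) - M i) = 0 := by
    rw [sum_sub_distrib, sub_eq_zero]
    exact_mod_cast hMW
  calc ∑ i, f i (M i) = ∑ i, (f i (M i) + ((W i : ℤ) - M i) • l) := by
        rw [sum_add_distrib, ← sum_smul, hcancel, zero_zsmul, add_zero]
    _ ≤ ∑ i, f i (W i) := sum_le_sum fun i _ ↦ hsupport i

theorem local_transfer_optimal_implies_global_general [DecidableEq ι]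
    (hf : ∀ i, Monotone (Δ_[1] (f i)))
    (hlocal : ∀ i j, i ≠ j → 1 ≤ M j → ∑ r, f r (M r) ≤ ∑ r, f r (unitTransfer M i j r))
    (hMW : ∑ i, W i = ∑ i, M i) :
    ∑ i, f i (M i) ≤ ∑ i, f i (W i) := by
  refine sum_le_sum_of_fwdDiff_le_fwdDiff hf (fun i j k hk ↦ ?_) hMW
  rcases eq_or_ne i j with rfl | hij
  · exact hf i hk.le
  · have hj : 1 ≤ M j := Nat.one_le_of_lt hk
    calc Δ_[1] (f j) k ≤ Δ_[1] (f j) (M j - 1) := hf j (Nat.le_sub_one_of_lt hk)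
      _ ≤ Δ_[1] (f i) (M i) := by
        rw [← sub_nonneg, ← sum_unitTransfer_sub_sum f hij hj]
        exact sub_nonneg.2 (hlocal i j hij hj)

end SeparableSum

section Convex

variable {𝕜 : Type*} [Field 𝕜] [LinearOrder 𝕜] [IsStrictOrderedRing 𝕜] {g : 𝕜 → 𝕜}

theorem monotone_fwdDiff_natCast_of_convexOn (hg : ConvexOn 𝕜 (Set.Ici 0) g) :
    Monotone (Δ_[1] fun k : ℕ ↦ g k) := by
  refine monotone_nat_of_le_succ fun k ↦ ?_
  have h := hg.slope_mono_adjacent (x := (k : 𝕜)) (y := (k + 1 : ℕ)) (z := (k + 1 + 1 : ℕ))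
    (Nat.cast_nonneg _) (Nat.cast_nonneg _) (by simp) (by simp)
  simpa [fwdDiff] using h

theorem convexOn_mul_comp_div (hg : ConvexOn 𝕜 (Set.Ici 0) g) {a c : 𝕜} (ha : 0 ≤ a)
    (hc : 0 ≤ c) : ConvexOn 𝕜 (Set.Ici 0) fun x ↦ a * g (x / c) := by
  have hmaps : Set.Ici 0 ⊆ LinearMap.mulRight 𝕜 c⁻¹ ⁻¹' Set.Ici 0 :=
    fun x hx ↦ mul_nonneg hx (inv_nonneg.2 hc)
  have h := ((hg.comp_linearMap (LinearMap.mulRight 𝕜 c⁻¹)).subset hmaps (convex_Ici 0)).smul ha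
  simpa [div_eq_mul_inv] using h

end Convex

/-- If no single-unit transfer (incrementing one coordinate and decrementing
another) improves the objective `F(M) = Σ_i p_i * g(M_i / (Z p_i))`, then `M`
minimizes `F` over all tuples of nonnegative integers summing to `t`. -/
theorem local_transfer_optimal_implies_global (n : ℕ) (hn : 0 < n)
    (p : Fin n → ℝ) (hp : ∀ i, 0 < p i) (hpsum : ∑ i, p i = 1)
    (Z : ℕ) (hZ : 0 < Z)
    (g : ℝ → ℝ) (hg : ConvexOn ℝ (Set.Ici 0) g) (hg1 : g 1 = 0)
    (t : ℕ) (ht : 1 ≤ t) (M : Fin n → ℕ) (hM : ∑ i, M i = t)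
    (hlocal : ∀ i j : Fin n, i ≠ j → 1 ≤ M j →
      ∑ r, p r * g ((M r : ℝ) / (Z * p r)) ≤
        ∑ r, p r * g (((M r + (if r = i then 1 else 0) -
          (if r = j then 1 else 0) : ℕ) : ℝ) / (Z * p r))) :
    ∀ W : Fin n → ℕ, ∑ i, W i = t →
      ∑ r, p r * g ((M r : ℝ) / (Z * p r)) ≤
        ∑ r, p r * g ((W r : ℝ) / (Z * p r)) := by
  intro W hW
  exact local_transfer_optimal_implies_global_general
    (fun r ↦ monotone_fwdDiff_natCast_of_convexOn
      (convexOn_mul_comp_div hg (hp r).le (mul_nonneg Z.cast_nonneg (hp r).le)))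
    hlocal (hW.trans hM.symm)
end

section
/- Let t ≥ 0 be an integer and suppose M = (M_1, …, M_n) minimizes the objective F over M[n,t]. Let u be any index attaining the minimum over i ∈ {1, …, n} of the increment cost p_i · ( g((M_i + 1)/(Z p_i)) − g(M_i/(Z p_i)) ). Then the tuple M⁺ defined by M⁺_i = M_i + 1 if i = u and M⁺_i = M_i otherwise minimizes F over M[n, t+1]. -/
/-!
The objective is a sum of one-variable costs `f i (M i)` whose increments grow with `M i`, because
`g` is convex. An allocation `W` of total `t + 1` exceeds `M` at some `j`; removing one unit there
leaves an allocation of total `t`, which costs at least as much as `M`, and the removed unit costs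
at least the increment of `M` at `j`, hence at least the increment of `M` at `u`.
-/

open fwdDiff

section ConvexIncrements

lemma convexOn_map_add_map_swap_le {𝕜 E β : Type*} [Semiring 𝕜] [PartialOrder 𝕜]
    [AddCommMonoid E] [SMul 𝕜 E] [AddCommMonoid β] [PartialOrder β] [IsOrderedAddMonoid β]
    [Module 𝕜 β] {s : Set E} {g : E → β}
    (hg : ConvexOn 𝕜 s g) {x y : E} (hx : x ∈ s) (hy : y ∈ s) {a b : 𝕜}
    (ha : 0 ≤ a) (hb : 0 ≤ b) (hab : a + b = 1) :
    g (a • x + b • y) + g (b • x + a • y) ≤ g x + g y := by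
  have hba : b + a = 1 := by rw [add_comm, hab]
  calc g (a • x + b • y) + g (b • x + a • y)
      ≤ (a • g x + b • g y) + (b • g x + a • g y) :=
        add_le_add (hg.2 hx hy ha hb hab) (hg.2 hx hy hb ha hba)
    _ = g x + g y := by
        rw [add_add_add_comm, ← add_smul, ← add_smul, hab, hba, one_smul, one_smul]

variable {𝕜 β : Type*} [Field 𝕜] [LinearOrder 𝕜] [IsStrictOrderedRing 𝕜]
  [AddCommGroup β] [PartialOrder β] [IsOrderedAddMonoid β] [Module 𝕜 β]

lemma convexOn_fwdDiff_le_fwdDiff {s : Set 𝕜} {g : 𝕜 → β} (hg : ConvexOn 𝕜 s g) {x y h : 𝕜}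
    (hx : x ∈ s) (hyh : y + h ∈ s) (hxy : x ≤ y) (hh : 0 ≤ h) :
    Δ_[h] g x ≤ Δ_[h] g y := by
  obtain rfl | hh := hh.eq_or_lt
  · simp [fwdDiff]
  have hpos : 0 < y - x + h := add_pos_of_nonneg_of_pos (sub_nonneg.2 hxy) hh
  -- `x + h` and `y` divide the segment from `x` to `y + h` in opposite proportions.
  have hsum := convexOn_map_add_map_swap_le hg hx hyh
    (div_nonneg (sub_nonneg.2 hxy) hpos.le) (div_nonneg hh.le hpos.le)
    (by rw [← add_div, div_self hpos.ne'])
  have hleft : ((y - x) / (y - x + h)) • x + (h / (y - x + h)) • (y + h) = x + h := by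
    simp only [smul_eq_mul]
    field
  have hright : (h / (y - x + h)) • x + ((y - x) / (y - x + h)) • (y + h) = y := by
    simp only [smul_eq_mul]
    field
  rw [hleft, hright] at hsum
  rw [fwdDiff, fwdDiff, sub_le_sub_iff, add_comm (g (y + h))]
  exact hsum

lemma monotone_fwdDiff_natCast_mul_of_convexOn {g : 𝕜 → β} (hg : ConvexOn 𝕜 (Set.Ici 0) g)
    {h : 𝕜} (hh : 0 ≤ h) : Monotone (Δ_[1] fun k : ℕ ↦ g (k * h)) := by
  intro k l hkl
  have hle : (k : 𝕜) * h ≤ l * h := by gcongr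
  have hmem : (l : 𝕜) * h + h ∈ Set.Ici 0 := Set.mem_Ici.2 (by positivity)
  simpa [fwdDiff, add_one_mul] using
    convexOn_fwdDiff_le_fwdDiff hg (Set.mem_Ici.2 (by positivity)) hmem hle hh

end ConvexIncrements

section GreedyStep

variable {ι A β : Type*} [Fintype ι] [DecidableEq ι]

lemma sum_apply_add_single [AddCommMonoid A] [AddCommGroup β] (f : ι → A → β) (V : ι → A)
    (j : ι) (a : A) :
    ∑ i, f i ((V + Pi.single j a : ι → A) i) = ∑ i, f i (V i) + Δ_[a] (f j) (V j) := by
  rw [← sub_eq_iff_eq_add', ← Finset.sum_sub_distrib, Fintype.sum_eq_single j]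
  · simp [fwdDiff]
  · intro i hij
    simp [hij]

lemma exists_eq_add_single_of_sum_lt_sum {M W : ι → ℕ} (h : ∑ i, M i < ∑ i, W i) :
    ∃ (j : ι) (V : ι → ℕ), W = V + Pi.single j 1 ∧ M j ≤ V j := by
  obtain ⟨j, -, hj⟩ := Finset.exists_lt_of_sum_lt h
  have hle : Pi.single j 1 ≤ W := by
    intro i
    obtain rfl | hij := eq_or_ne i j
    · simpa using Nat.one_le_of_lt hj
    · simp [hij]
  refine ⟨j, W - Pi.single j 1, (tsub_add_cancel_of_le hle).symm, ?_⟩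
  simpa using Nat.le_sub_one_of_lt hj

theorem isMinOn_sum_add_single [AddCommGroup β] [PartialOrder β] [IsOrderedAddMonoid β]
    {f : ι → ℕ → β} (hf : ∀ i, Monotone (Δ_[1] (f i))) {t : ℕ} {M : ι → ℕ}
    (hM : ∑ i, M i = t) (hopt : IsMinOn (fun W ↦ ∑ i, f i (W i)) {W | ∑ i, W i = t} M)
    {u : ι} (hu : ∀ i, Δ_[1] (f u) (M u) ≤ Δ_[1] (f i) (M i)) :
    IsMinOn (fun W ↦ ∑ i, f i (W i)) {W | ∑ i, W i = t + 1} (M + Pi.single u 1) := by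
  refine isMinOn_iff.2 fun W (hW : ∑ i, W i = t + 1) ↦ ?_
  obtain ⟨j, V, rfl, hj⟩ := exists_eq_add_single_of_sum_lt_sum (M := M) (W := W) (by lia)
  have hV : ∑ i, V i = t := by
    simpa [Finset.sum_add_distrib] using hW
  calc ∑ i, f i ((M + Pi.single u 1 : ι → ℕ) i)
      = ∑ i, f i (M i) + Δ_[1] (f u) (M u) := sum_apply_add_single f M u 1
    _ ≤ ∑ i, f i (V i) + Δ_[1] (f j) (V j) :=
        add_le_add (hopt hV) ((hu j).trans (hf j hj))
    _ = ∑ i, f i ((V + Pi.single j 1 : ι → ℕ) i) := (sum_apply_add_single f V j 1).symm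

end GreedyStep

theorem increment_min_cost_optimal_general {ι 𝕜 : Type*} [Fintype ι] [DecidableEq ι]
    [Field 𝕜] [LinearOrder 𝕜] [IsStrictOrderedRing 𝕜] {p : ι → 𝕜} (hp : ∀ i, 0 < p i)
    {Z : 𝕜} (hZ : 0 < Z) {g : 𝕜 → 𝕜} (hg : ConvexOn 𝕜 (Set.Ici 0) g)
    {t : ℕ} {M : ι → ℕ} (hM : ∑ i, M i = t)
    (hopt : IsMinOn (fun W : ι → ℕ ↦ ∑ i, p i * g (W i / (Z * p i))) {W | ∑ i, W i = t} M)
    {u : ι}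
    (hu : ∀ i, p u * (g ((M u + 1) / (Z * p u)) - g (M u / (Z * p u))) ≤
      p i * (g ((M i + 1) / (Z * p i)) - g (M i / (Z * p i)))) :
    IsMinOn (fun W : ι → ℕ ↦ ∑ i, p i * g (W i / (Z * p i))) {W | ∑ i, W i = t + 1}
      (M + Pi.single u 1) := by
  refine isMinOn_sum_add_single (f := fun i k ↦ p i * g (k / (Z * p i))) (fun i ↦ ?_) hM hopt ?_
  · have hstep : 0 ≤ (Z * p i)⁻¹ := inv_nonneg.2 (mul_pos hZ (hp i)).le
    simpa only [div_eq_mul_inv, smul_eq_mul] using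
      monotone_fwdDiff_natCast_mul_of_convexOn (hg.smul (hp i).le) hstep
  · simpa [fwdDiff, mul_sub] using hu

/-- If `M` minimizes `F(M) = Σ_i p_i * g(M_i / (Z p_i))` over tuples summing to
`t`, and `u` attains the minimal increment cost, then `M + e_u` minimizes `F`
over tuples summing to `t + 1`. -/
theorem increment_min_cost_optimal (n : ℕ) (hn : 0 < n)
    (p : Fin n → ℝ) (hp : ∀ i, 0 < p i) (hpsum : ∑ i, p i = 1)
    (Z : ℕ) (hZ : 0 < Z)
    (g : ℝ → ℝ) (hg : ConvexOn ℝ (Set.Ici 0) g) (hg1 : g 1 = 0)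
    (t : ℕ) (M : Fin n → ℕ) (hM : ∑ i, M i = t)
    (hopt : ∀ W : Fin n → ℕ, ∑ i, W i = t →
      ∑ r, p r * g ((M r : ℝ) / (Z * p r)) ≤
        ∑ r, p r * g ((W r : ℝ) / (Z * p r)))
    (u : Fin n)
    (hu : ∀ i : Fin n,
      p u * (g (((M u : ℝ) + 1) / (Z * p u)) - g ((M u : ℝ) / (Z * p u))) ≤
        p i * (g (((M i : ℝ) + 1) / (Z * p i)) - g ((M i : ℝ) / (Z * p i)))) :
    ∀ W : Fin n → ℕ, ∑ i, W i = t + 1 →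
      ∑ r, p r * g (((M r + (if r = u then 1 else 0) : ℕ) : ℝ) / (Z * p r)) ≤
        ∑ r, p r * g ((W r : ℝ) / (Z * p r)) :=
  fun W hW ↦ by simpa [Pi.single_apply] using
    isMinOn_iff.1 (increment_min_cost_optimal_general hp (Nat.cast_pos.2 hZ) hg hM hopt hu) W hW
end

section
/- Let p = (p_1, …, p_n) be a probability distribution with p_i ≥ 0 for each i and Σ p_i = 1, and let Z be a positive integer. Suppose M = (M_1, …, M_n) ∈ M[n,Z] minimizes the L1 objective Σ_{i=1}^n |M_i − Z p_i| over M[n,Z]. Then for every i, ⌊Z p_i⌋ ≤ M_i ≤ ⌊Z p_i⌋ + 1. -/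
/-!
Moving one unit of mass from a coordinate `a` with `q a < M a` to a coordinate `b` with
`M b < q b` changes the objective by `(|x - 1| - x) + (|y - 1| - y)`, where `x = M a - q a` and
`y = q b - M b`. At a minimizer this is nonnegative, which forces `x + y ≤ 1`. Since the deviations
`M i - q i` sum to zero, every excess `x > 0` is accompanied by a deficit `y > 0` and conversely, so
each deviation is smaller than `1` in absolute value.
-/

section Exchange

variable {ι α A : Type*} [Fintype ι]

theorem sum_eq_add_add_sum_compl_pair [DecidableEq ι] [AddCommMonoid A] (f : ι → A) {a b : ι}
    (hab : a ≠ b) : ∑ i, f i = f a + f b + ∑ i ∈ {a, b}ᶜ, f i := by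
  rw [← Finset.sum_add_sum_compl {a, b}, Finset.sum_pair hab]

theorem sum_update_update [DecidableEq ι] [AddCommMonoid A] (f : ι → α → A) (M : ι → α)
    {a b : ι} (hab : a ≠ b) (x y : α) :
    ∑ i, f i (Function.update (Function.update M a x) b y i) =
      f a x + f b y + ∑ i ∈ {a, b}ᶜ, f i (M i) := by
  rw [sum_eq_add_add_sum_compl_pair _ hab, Function.update_of_ne hab, Function.update_self,
    Function.update_self]
  congr 1
  refine Finset.sum_congr rfl fun i hi ↦ ?_
  obtain ⟨hia, hib⟩ : i ≠ a ∧ i ≠ b := by simpa using hi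
  rw [Function.update_of_ne hib, Function.update_of_ne hia]

theorem add_le_add_of_forall_sum_le [AddCommMonoid α] [AddCommMonoid A] [PartialOrder A]
    [IsOrderedCancelAddMonoid A] {f : ι → α → A} {M : ι → α}
    (hmin : ∀ W : ι → α, ∑ i, W i = ∑ i, M i → ∑ i, f i (M i) ≤ ∑ i, f i (W i))
    {a b : ι} (hab : a ≠ b) {x y : α} (hxy : x + y = M a + M b) :
    f a (M a) + f b (M b) ≤ f a x + f b y := by
  classical
  have hsum : ∑ i, Function.update (Function.update M a x) b y i = ∑ i, M i := by
    rw [sum_update_update (fun _ m ↦ m) M hab, sum_eq_add_add_sum_compl_pair M hab, hxy]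
  have hle := hmin _ hsum
  rw [sum_update_update f M hab, sum_eq_add_add_sum_compl_pair _ hab] at hle
  exact le_of_add_le_add_right hle

end Exchange

section L1Minimizer

variable {ι R : Type*} [Fintype ι] [CommRing R] [LinearOrder R]

/-- `M` minimizes the `L1` distance to `q` among the tuples of natural numbers with the same sum
as `M`. The prescribed total is read off from `M` itself. -/
def IsL1Minimizer (q : ι → R) (M : ι → ℕ) : Prop :=
  ∀ W : ι → ℕ, ∑ i, W i = ∑ i, M i → ∑ i, |(M i : R) - q i| ≤ ∑ i, |(W i : R) - q i|

namespace IsL1Minimizer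

variable [IsStrictOrderedRing R] {q : ι → R} {M : ι → ℕ}

theorem excess_add_deficit_le_one (hmin : IsL1Minimizer q M) {a b : ι} (hqa : 0 ≤ q a)
    (ha : q a < M a) (hb : M b < q b) : (M a - q a) + (q b - M b) ≤ 1 := by
  have hab : a ≠ b := by
    rintro rfl
    exact lt_asymm ha hb
  have hMa : 1 ≤ M a := Nat.cast_pos.mp (hqa.trans_lt ha)
  have hexchange : |(M a : R) - q a| + |(M b : R) - q b| ≤
      |((M a - 1 : ℕ) : R) - q a| + |((M b + 1 : ℕ) : R) - q b| :=
    add_le_add_of_forall_sum_le (f := fun i (m : ℕ) ↦ |(m : R) - q i|) hmin hab (by lia)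
  rw [abs_of_pos (sub_pos.mpr ha), abs_of_neg (sub_neg.mpr hb)] at hexchange
  push_cast [hMa] at hexchange
  rcases abs_cases ((M a : R) - 1 - q a) with hx | hx <;>
    rcases abs_cases ((M b : R) + 1 - q b) with hy | hy <;> linarith

theorem abs_sub_lt_one (hmin : IsL1Minimizer q M) (hq : ∀ i, 0 ≤ q i)
    (hsum : ∑ i, q i = ∑ i, (M i : R)) (i : ι) : |(M i : R) - q i| < 1 := by
  by_cases hi : (M i : R) = q i
  · simp [hi]
  obtain ⟨a, -, ha⟩ : ∃ a ∈ Finset.univ, 0 < (M a : R) - q a :=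
    Finset.exists_pos_of_sum_zero_of_exists_nonzero _
      (by rw [Finset.sum_sub_distrib, hsum, sub_self]) ⟨i, Finset.mem_univ i, sub_ne_zero.mpr hi⟩
  obtain ⟨b, -, hb⟩ : ∃ b ∈ Finset.univ, 0 < q b - M b :=
    Finset.exists_pos_of_sum_zero_of_exists_nonzero _
      (by rw [Finset.sum_sub_distrib, hsum, sub_self])
      ⟨i, Finset.mem_univ i, sub_ne_zero.mpr (Ne.symm hi)⟩
  rcases lt_or_gt_of_ne hi with hdeficit | hexcess
  · have := hmin.excess_add_deficit_le_one (hq a) (sub_pos.mp ha) hdeficit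
    rw [abs_of_neg (sub_neg.mpr hdeficit)]
    linarith
  · have := hmin.excess_add_deficit_le_one (hq i) hexcess (sub_pos.mp hb)
    rw [abs_of_pos (sub_pos.mpr hexcess)]
    linarith

end IsL1Minimizer

theorem l1_minimizer_floor_bounds_general [IsStrictOrderedRing R] [FloorRing R] {q : ι → R}
    {M : ι → ℕ} (hq : ∀ i, 0 ≤ q i) (hsum : ∑ i, q i = ∑ i, (M i : R))
    (hmin : IsL1Minimizer q M) (i : ι) : ⌊q i⌋ ≤ (M i : ℤ) ∧ (M i : ℤ) ≤ ⌈q i⌉ := by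
  obtain ⟨hlower, hupper⟩ := abs_lt.mp (hmin.abs_sub_lt_one hq hsum i)
  rw [Int.floor_le_iff, Int.le_ceil_iff, Int.cast_natCast]
  constructor <;> linarith

end L1Minimizer

/-- Any minimizer of the `L1` objective `Σ_i |M_i - Z p_i|` over tuples of
nonnegative integers summing to `Z` satisfies `⌊Z p_i⌋ ≤ M_i ≤ ⌊Z p_i⌋ + 1`
for every `i`. -/
theorem l1_minimizer_floor_bounds (n : ℕ) (hn : 0 < n)
    (p : Fin n → ℝ) (hp : ∀ i, 0 ≤ p i) (hpsum : ∑ i, p i = 1)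
    (Z : ℕ) (hZ : 0 < Z) (M : Fin n → ℕ) (hM : ∑ i, M i = Z)
    (hopt : ∀ W : Fin n → ℕ, ∑ i, W i = Z →
      ∑ i, |(M i : ℝ) - (Z : ℝ) * p i| ≤ ∑ i, |(W i : ℝ) - (Z : ℝ) * p i|) :
    ∀ i, ⌊(Z : ℝ) * p i⌋ ≤ (M i : ℤ) ∧ (M i : ℤ) ≤ ⌊(Z : ℝ) * p i⌋ + 1 := by
  have hsum : ∑ i, (Z : ℝ) * p i = ∑ i, (M i : ℝ) := by
    rw [← Finset.mul_sum, hpsum, mul_one, ← Nat.cast_sum, hM]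
  have hmin : IsL1Minimizer (fun i ↦ (Z : ℝ) * p i) M := fun W hW ↦ hopt W (hW.trans hM)
  exact fun i ↦ (l1_minimizer_floor_bounds_general (fun j ↦ mul_nonneg Z.cast_nonneg (hp j)) hsum
    hmin i).imp_right (·.trans (Int.ceil_le_floor_add_one _))
end
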